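/- arXiv:2412.16109 — 4 statements merged into one kernel-verified Lean document; each statement's English description precedes it below -/
import Mathlib

section
/- Assume the domain and weight setting below with d ≥ 1, p ∈ (1,∞), and β ∈ ℝ, and let δ ∈ (0, 1/(3κ₀²κ₁)). Then there exists a constant C, depending only on d, p, β, κ₀ and κ₁, such that for every measurable v : Ω → ℝ, the function v̄(x) := v(x)·γ(x)^{−β/p} satisfies [v̄]_{𝔚^p[δ](Ω;0)}^p ≤ C·( [v]_{𝔚^p[δ](Ω;β)}^p + ∫_Ω |v(x)|^p γ(x)^{−(β+p)} dx ), where all quantities may equal +∞. -/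
/-!
The boundary of `Ω = Ωstar \ Γ` contains `Γ`, because deleting a finite set from an open subset of
`ℝ^d`, `d ≥ 1`, does not change its closure (`subset_frontier_diff`). Hence
`η(x) ≤ dist(x, Γ) ≤ κ₀ γ(x)`, and for `y ∈ B(x, δ η(x))` the Lipschitz bound together with
`δ < 1/(3κ₀²κ₁)` gives `|γ(y) - γ(x)| ≤ γ(x)/3` (`weight_comparable`): the ratio `γ(y)/γ(x)` stays in
`[2/3, 4/3]`, where `t ↦ t^s` is bounded and Lipschitz (`exists_rpow_bound`). In the splitting
`v̄(y) - v̄(x) = γ(y)^s (v(y) - v(x)) + v(x) (γ(y)^s - γ(x)^s)`, `s = -β/p`,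
the first term is therefore controlled by `γ(x)^s |v(y) - v(x)|`, the second by
`|v(x)| γ(x)^(s-1) δη(x)` (`pointwise_bound`). Dividing the `p`-th power by `(δη(x))^(d+p)`, the first
term integrates to the weighted seminorm of `v`. The second becomes constant in `y`, and the factor
`(δη(x))^(-d)` it carries cancels the volume of the ball. Evaluating `v` at the centre `x` in the
second term makes any exchange of the order of integration unnecessary.
-/

open MeasureTheory Metric Set Filter
open scoped ENNReal NNReal Topology

noncomputable section

/-- Euclidean space `ℝ^d`. -/
abbrev Euc (d : ℕ) : Type := EuclideanSpace ℝ (Fin d)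

/-- The constant `C̄_{d,p} = √π Γ((d+p)/2) / (Γ((p+1)/2) Γ(d/2))`. -/
def Cbar (d : ℕ) (p : ℝ) : ℝ :=
  Real.sqrt Real.pi * Real.Gamma (((d : ℝ) + p) / 2) /
    (Real.Gamma ((p + 1) / 2) * Real.Gamma ((d : ℝ) / 2))

/-- The surface measure `σ(𝕊^{d-1}) = 2 π^{d/2} / Γ(d/2)` of the unit sphere in `ℝ^d`. -/
def sphArea (d : ℕ) : ℝ := 2 * Real.pi ^ ((d : ℝ) / 2) / Real.Gamma ((d : ℝ) / 2)

/-- The normalizing constant `C̄_{d,p} (d+p) / σ(𝕊^{d-1})` of the nonlocal seminorm. -/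
def normC (d : ℕ) (p : ℝ) : ℝ := Cbar d p * ((d : ℝ) + p) / sphArea d

/-- The distance `η(x) = dist(x, ∂Ω)` to the boundary of `Ω`. -/
def etaD {d : ℕ} (Ω : Set (Euc d)) (x : Euc d) : ℝ := Metric.infDist x (frontier Ω)

/-- The `p`-th power `[u]_{𝔚^p[δ](Ω;β)}^p` of the weighted nonlocal seminorm. -/
def nlEnergy (d : ℕ) (Ω : Set (Euc d)) (γ : Euc d → ℝ) (p β δ : ℝ) (u : Euc d → ℝ) : ℝ≥0∞ :=
  ENNReal.ofReal (normC d p) *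
    ∫⁻ x in Ω, ∫⁻ y in ball x (δ * etaD Ω x),
      ENNReal.ofReal (γ x ^ (-β) * |u y - u x| ^ p / (δ * etaD Ω x) ^ ((d : ℝ) + p))

/-- The weighted nonlocal seminorm `[u]_{𝔚^p[δ](Ω;β)}`. -/
def semiW (d : ℕ) (Ω : Set (Euc d)) (γ : Euc d → ℝ) (p β δ : ℝ) (u : Euc d → ℝ) : ℝ≥0∞ :=
  nlEnergy d Ω γ p β δ u ^ (1 / p)


/-- On `[2/3, 4/3]` the power `t ↦ t ^ s` is bounded and Lipschitz, with one common constant. -/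
lemma exists_rpow_bound (s : ℝ) : ∃ K : ℝ, 0 < K ∧ ∀ t ∈ Icc (2 / 3 : ℝ) (4 / 3),
    t ^ s ≤ K ∧ |t ^ s - 1| ≤ K * |t - 1| := by
  have hc : ∀ a : ℝ, ContinuousOn (fun t : ℝ => t ^ a) (Icc (2 / 3 : ℝ) (4 / 3)) := fun a t ht =>
    (Real.continuousAt_rpow_const t a
      (Or.inl (by have := ht.1; intro h; rw [h] at this; norm_num at this))).continuousWithinAt
  obtain ⟨K₁, h₁⟩ := isCompact_Icc.exists_bound_of_continuousOn (hc s)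
  obtain ⟨K₂, h₂⟩ := isCompact_Icc.exists_bound_of_continuousOn
    ((continuousOn_const (c := s)).mul (hc (s - 1)))
  refine ⟨max (max K₁ K₂) 1, by positivity, fun t ht => ⟨?_, ?_⟩⟩
  · exact (le_abs_self _).trans ((h₁ t ht).trans ((le_max_left _ _).trans (le_max_left _ _)))
  · have := Convex.norm_image_sub_le_of_norm_hasDerivWithin_le (f := fun t : ℝ => t ^ s)
      (f' := fun t => s * t ^ (s - 1)) (s := Icc (2 / 3 : ℝ) (4 / 3)) (C := K₂) (x := 1) (y := t)
      (fun x hx => (Real.hasDerivAt_rpow_const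
        (Or.inl (by have := hx.1; intro h; rw [h] at this; norm_num at this))).hasDerivWithinAt)
      h₂ (convex_Icc _ _) (by constructor <;> norm_num) ht
    simp only [Real.one_rpow, Real.norm_eq_abs] at this
    refine this.trans ?_
    gcongr
    exact (le_max_right _ _).trans (le_max_left _ _)

lemma add_rpow_le_two_rpow_mul {a b p : ℝ} (ha : 0 ≤ a) (hb : 0 ≤ b) (hp : 0 < p) :
    (a + b) ^ p ≤ 2 ^ p * (a ^ p + b ^ p) := by
  have hm : a + b ≤ 2 * max a b := by
    linarith [le_max_left a b, le_max_right a b]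
  calc (a + b) ^ p ≤ (2 * max a b) ^ p := by gcongr
    _ = 2 ^ p * (max a b) ^ p := Real.mul_rpow (by norm_num) (le_max_of_le_left ha)
    _ ≤ 2 ^ p * (a ^ p + b ^ p) := by
      gcongr
      have := Real.rpow_nonneg ha p
      have := Real.rpow_nonneg hb p
      rcases max_choice a b with h | h <;> rw [h] <;> linarith

/-- The estimate of the integrand: `g`, `h` are the values of the weight and `a`, `b` those of the
function at the centre `x` and at the point `y`, and `r` is the radius of the ball. -/
lemma pointwise_bound {p β κ K g h a b r D : ℝ} (hp : 1 < p) (hκ : 0 < κ) (hK : 0 < K)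
    (hKb : ∀ t ∈ Icc (2 / 3 : ℝ) (4 / 3),
      t ^ (-(β / p)) ≤ K ∧ |t ^ (-(β / p)) - 1| ≤ K * |t - 1|)
    (hg : 0 < g) (hr : 0 < r) (h1 : |h - g| ≤ κ * r) (h2 : |h - g| ≤ g / 3) :
    |b * h ^ (-(β / p)) - a * g ^ (-(β / p))| ^ p / r ^ (D + p) ≤
      (2 * K) ^ p * (g ^ (-β) * |b - a| ^ p / r ^ (D + p)) +
        (2 * K * κ) ^ p * (|a| ^ p * g ^ (-(β + p))) / r ^ D := by
  have hp0 : 0 < p := by linarith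
  set s := -(β / p) with hs
  obtain ⟨h3, h4⟩ := abs_le.1 h2
  have ht : h / g ∈ Icc (2 / 3 : ℝ) (4 / 3) := by
    constructor
    · rw [le_div_iff₀ hg]; linarith
    · rw [div_le_iff₀ hg]; linarith
  have hh : h = g * (h / g) := by field_simp
  have hhs : h ^ s = g ^ s * (h / g) ^ s := by
    conv_lhs => rw [hh]
    exact Real.mul_rpow hg.le (by linarith [ht.1])
  obtain ⟨k1, k2⟩ := hKb _ ht
  have hgs : 0 < g ^ s := Real.rpow_pos_of_pos hg s
  have e1 : |h ^ s * (b - a)| ≤ K * (g ^ s * |b - a|) := by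
    rw [abs_mul, hhs, abs_of_nonneg (by have := ht.1; positivity)]
    calc g ^ s * (h / g) ^ s * |b - a| ≤ g ^ s * K * |b - a| := by gcongr
      _ = _ := by ring
  have e2 : |a * (h ^ s - g ^ s)| ≤ K * κ * (r * (|a| * (g ^ s / g))) := by
    have : h ^ s - g ^ s = g ^ s * ((h / g) ^ s - 1) := by rw [hhs]; ring
    rw [this, abs_mul, abs_mul, abs_of_pos hgs]
    have k3 : |h / g - 1| ≤ κ * r / g := by
      have : h / g - 1 = (h - g) / g := by field_simp
      rw [this, abs_div, abs_of_pos hg]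
      gcongr
    calc |a| * (g ^ s * |(h / g) ^ s - 1|) ≤ |a| * (g ^ s * (K * (κ * r / g))) := by
          gcongr
          exact k2.trans (by gcongr)
      _ = _ := by ring
  have e3 : |b * h ^ s - a * g ^ s| ≤
      K * (g ^ s * |b - a|) + K * κ * (r * (|a| * (g ^ s / g))) := by
    have : b * h ^ s - a * g ^ s = h ^ s * (b - a) + a * (h ^ s - g ^ s) := by ring
    rw [this]
    exact (abs_add_le _ _).trans (add_le_add e1 e2)
  have hsp : (g ^ s) ^ p = g ^ (-β) := by
    rw [← Real.rpow_mul hg.le, hs]; congr 1; field_simp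
  have hsp' : (g ^ s / g) ^ p = g ^ (-(β + p)) := by
    rw [Real.div_rpow hgs.le hg.le, hsp, ← Real.rpow_sub hg]; congr 1; ring
  have e4 : |b * h ^ s - a * g ^ s| ^ p ≤ (2 * K) ^ p * (g ^ (-β) * |b - a| ^ p) +
      (2 * K * κ) ^ p * (r ^ p * (|a| ^ p * g ^ (-(β + p)))) := by
    calc _ ≤ _ := Real.rpow_le_rpow (abs_nonneg _) e3 hp0.le
      _ ≤ _ := add_rpow_le_two_rpow_mul (by positivity) (by positivity) hp0
      _ = _ := by
        rw [Real.mul_rpow hK.le (by positivity), Real.mul_rpow hgs.le (abs_nonneg _),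
          Real.mul_rpow (x := K * κ) (by positivity) (by positivity),
          Real.mul_rpow hr.le (by positivity), Real.mul_rpow (abs_nonneg a) (by positivity),
          hsp, hsp', Real.mul_rpow (x := 2) (by norm_num) hK.le,
          Real.mul_rpow (x := 2 * K) (by positivity) hκ.le,
          Real.mul_rpow (x := 2) (by norm_num) hK.le, Real.mul_rpow hK.le hκ.le]
        ring
  have hrD : 0 < r ^ D := Real.rpow_pos_of_pos hr _
  have hrp : 0 < r ^ p := Real.rpow_pos_of_pos hr _
  calc _ ≤ ((2 * K) ^ p * (g ^ (-β) * |b - a| ^ p) +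
      (2 * K * κ) ^ p * (r ^ p * (|a| ^ p * g ^ (-(β + p))))) / r ^ (D + p) := by gcongr
    _ = _ := by
      rw [Real.rpow_add hr]
      field_simp

lemma subset_frontier_diff {d : ℕ} (hd : 1 ≤ d) {U Γ : Set (Euc d)} (hU : IsOpen U)
    (hΓ : Γ.Finite) (hsub : Γ ⊆ closure U) : Γ ⊆ frontier (U \ Γ) := by
  have : Nonempty (Fin d) := ⟨⟨0, hd⟩⟩
  have hdense : Dense Γᶜ := hΓ.countable.dense_compl ℝ
  have hcl : closure U ⊆ closure (U \ Γ) :=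
    closure_minimal (hdense.open_subset_closure_inter hU) isClosed_closure
  intro x hx
  exact ⟨hcl (hsub hx), fun h => (interior_subset h).2 hx⟩

lemma ball_subset_of_le_infDist_frontier {d : ℕ} {U : Set (Euc d)} (hU : IsOpen U) {x : Euc d}
    (hx : x ∈ U) {r : ℝ} (hr : r ≤ infDist x (frontier U)) : ball x r ⊆ U := by
  rcases le_or_gt r 0 with h0 | h0
  · simp [ball_eq_empty.2 h0]
  refine (convex_ball x r).isPreconnected.subset_of_closure_inter_subset hU
    ⟨x, mem_ball_self h0, hx⟩ ?_
  rintro y ⟨hy1, hy2⟩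
  by_contra hy
  have hf : y ∈ frontier U := ⟨hy1, fun h => hy (interior_subset h)⟩
  have := infDist_le_dist_of_mem (x := x) hf
  rw [mem_ball, dist_comm] at hy2
  linarith

/-- On the ball `B(x, δη(x))` the weight varies by at most a third of its value at `x`. -/
lemma weight_comparable {d : ℕ} (hd : 1 ≤ d) {κ₀ κ₁ : ℝ} (hκ₀ : 1 ≤ κ₀) (hκ₁ : 1 ≤ κ₁)
    {U Γ : Set (Euc d)} (hU : IsOpen U) (hΓ : Γ.Finite) (hne : Γ.Nonempty) (hsub : Γ ⊆ closure U)
    {γ : Euc d → ℝ} (hpos : ∀ x ∈ U \ Γ, 0 < γ x)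
    (hL : LipschitzOnWith (Real.toNNReal κ₁) γ (U \ Γ))
    (hdist : ∀ x ∈ U \ Γ, infDist x Γ ≤ κ₀ * γ x) {δ : ℝ} (hδ : 0 < δ)
    (hδ' : δ < 1 / (3 * κ₀ ^ 2 * κ₁)) {x y : Euc d} (hx : x ∈ U \ Γ)
    (hy : y ∈ ball x (δ * etaD (U \ Γ) x)) :
    |γ y - γ x| ≤ κ₁ * (δ * etaD (U \ Γ) x) ∧ |γ y - γ x| ≤ γ x / 3 := by
  have hη0 : 0 ≤ etaD (U \ Γ) x := infDist_nonneg
  have hη : etaD (U \ Γ) x ≤ κ₀ * γ x :=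
    (infDist_le_infDist_of_subset (subset_frontier_diff hd hU hΓ hsub) hne).trans (hdist x hx)
  have hδκ : δ * (3 * κ₀ ^ 2 * κ₁) < 1 := by rwa [lt_div_iff₀ (by positivity)] at hδ'
  have hδ1 : δ ≤ 1 := by
    refine hδ'.le.trans (div_le_one_of_le₀ ?_ (by positivity))
    nlinarith [one_le_mul_of_one_le_of_one_le (one_le_pow₀ hκ₀ (n := 2)) hκ₁]
  have hyU : y ∈ U \ Γ :=
    ball_subset_of_le_infDist_frontier (hU.sdiff hΓ.isClosed) hx
      (mul_le_of_le_one_left hη0 hδ1) hy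
  have hl := hL.dist_le_mul y hyU x hx
  rw [Real.coe_toNNReal _ (by linarith), Real.dist_eq] at hl
  have h1 : |γ y - γ x| ≤ κ₁ * (δ * etaD (U \ Γ) x) :=
    hl.trans (by gcongr; exact (mem_ball.1 hy).le)
  refine ⟨h1, h1.trans ?_⟩
  have hg := hpos x hx
  calc κ₁ * (δ * etaD (U \ Γ) x) ≤ κ₁ * (δ * (κ₀ * γ x)) := by gcongr
    _ ≤ κ₁ * (δ * (κ₀ ^ 2 * γ x)) := by
      gcongr
      nlinarith
    _ = δ * (3 * κ₀ ^ 2 * κ₁) * (γ x / 3) := by ring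
    _ ≤ 1 * (γ x / 3) := by gcongr
    _ = γ x / 3 := one_mul _

/-- **Weight transfer in the nonlocal seminorm.** There is a constant `C` depending only on
`d, p, β, κ₀, κ₁` such that for every admissible setting, every `δ ∈ (0,1/(3κ₀²κ₁))`, and
every measurable `v : Ω → ℝ`, the function `v̄ := v·γ^{-β/p}` satisfies
`[v̄]_{𝔚^p[δ](Ω;0)}^p ≤ C ([v]_{𝔚^p[δ](Ω;β)}^p + ∫_Ω |v|^p γ^{-(β+p)})`
(all quantities possibly `+∞`). -/
theorem stmt13 (d : ℕ) (hd : 1 ≤ d) (p β κ₀ κ₁ : ℝ) (hp : 1 < p)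
    (hκ₀ : 1 ≤ κ₀) (hκ₁ : 1 ≤ κ₁) :
    ∃ C : ℝ, 0 < C ∧
      ∀ (Ωstar Γ : Set (Euc d)), IsOpen Ωstar → Bornology.IsBounded Ωstar →
        Γ.Finite → Γ.Nonempty → Γ ⊆ closure Ωstar →
        ∀ γ : Euc d → ℝ,
          (∀ x ∈ Ωstar \ Γ, 0 < γ x) →
          LipschitzOnWith (Real.toNNReal κ₁) γ (Ωstar \ Γ) →
          (∀ x ∈ Ωstar \ Γ, Metric.infDist x Γ ≤ κ₀ * γ x) →
          ∀ δ : ℝ, 0 < δ → δ < 1 / (3 * κ₀ ^ 2 * κ₁) →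
          ∀ v : Euc d → ℝ, Measurable v →
            nlEnergy d (Ωstar \ Γ) γ p 0 δ (fun x => v x * γ x ^ (-(β / p))) ≤
              ENNReal.ofReal C *
                (nlEnergy d (Ωstar \ Γ) γ p β δ v +
                  ∫⁻ x in Ωstar \ Γ, ENNReal.ofReal (|v x| ^ p * γ x ^ (-(β + p)))) := by
  have hp0 : 0 < p := by linarith
  obtain ⟨K, hK, hKb⟩ := exists_rpow_bound (-(β / p))
  have : Nonempty (Fin d) := ⟨⟨0, hd⟩⟩
  -- `M` bounds the contribution of `v(y) - v(x)`; `B * V` that of the variation of the weight,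
  -- with `V` the volume of the unit ball.
  set N : ℝ≥0∞ := ENNReal.ofReal (normC d p) with hN
  set V : ℝ≥0∞ := volume (ball (0 : Euc d) 1) with hV
  set M : ℝ := (2 * K) ^ p with hM
  set B : ℝ := (2 * K * κ₁) ^ p with hB
  have hM0 : 0 < M := by positivity
  have hB0 : 0 < B := by positivity
  set T : ℝ≥0∞ := ENNReal.ofReal M + N * (ENNReal.ofReal B * V) with hT
  have hVtop : V ≠ ∞ := measure_ball_lt_top.ne
  have hTtop : T ≠ ∞ :=
    ENNReal.add_ne_top.2 ⟨ENNReal.ofReal_ne_top, ENNReal.mul_ne_top ENNReal.ofReal_ne_top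
      (ENNReal.mul_ne_top ENNReal.ofReal_ne_top hVtop)⟩
  refine ⟨T.toReal + 1, by positivity, ?_⟩
  intro U Γ hU hbdd hΓ hne hsub γ hpos hL hdist δ hδ hδ' v hv
  have hTle : T ≤ ENNReal.ofReal (T.toReal + 1) := by
    conv_lhs => rw [← ENNReal.ofReal_toReal hTtop]
    exact ENNReal.ofReal_le_ofReal (by linarith)
  have hΩ : MeasurableSet (U \ Γ) := hU.measurableSet.diff hΓ.measurableSet
  set E : Euc d → ℝ≥0∞ := fun x => ∫⁻ y in ball x (δ * etaD (U \ Γ) x),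
    ENNReal.ofReal (γ x ^ (-β) * |v y - v x| ^ p / (δ * etaD (U \ Γ) x) ^ ((d : ℝ) + p)) with hE
  set I : Euc d → ℝ≥0∞ := fun x => ENNReal.ofReal (|v x| ^ p * γ x ^ (-(β + p))) with hI
  have hinner : ∀ x ∈ U \ Γ,
      ∫⁻ y in ball x (δ * etaD (U \ Γ) x),
        ENNReal.ofReal (γ x ^ (-(0 : ℝ)) * |v y * γ y ^ (-(β / p)) - v x * γ x ^ (-(β / p))| ^ p /
          (δ * etaD (U \ Γ) x) ^ ((d : ℝ) + p)) ≤
      ENNReal.ofReal M * E x + ENNReal.ofReal B * V * I x := by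
    intro x hx
    have hcomp := fun y => weight_comparable hd hκ₀ hκ₁ hU hΓ hne hsub hpos hL hdist hδ hδ' hx
      (y := y)
    simp only [hE]
    set r := δ * etaD (U \ Γ) x with hr
    rcases le_or_gt r 0 with h0 | h0
    · simp [ball_eq_empty.2 h0]
    have hrd : 0 < r ^ (d : ℝ) := Real.rpow_pos_of_pos h0 _
    have hg := hpos x hx
    calc _ ≤ ∫⁻ y in ball x r,
          (ENNReal.ofReal M * ENNReal.ofReal (γ x ^ (-β) * |v y - v x| ^ p / r ^ ((d : ℝ) + p)) +
            ENNReal.ofReal (B * (|v x| ^ p * γ x ^ (-(β + p))) / r ^ (d : ℝ))) := by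
          refine setLIntegral_mono' measurableSet_ball fun y hy => ?_
          rw [← ENNReal.ofReal_mul hM0.le, ← ENNReal.ofReal_add (by positivity) (by positivity)]
          refine ENNReal.ofReal_le_ofReal ?_
          rw [neg_zero, Real.rpow_zero, one_mul]
          exact pointwise_bound hp (by linarith) hK hKb hg h0 (hcomp y hy).1 (hcomp y hy).2
      _ = ENNReal.ofReal M * (∫⁻ y in ball x r,
            ENNReal.ofReal (γ x ^ (-β) * |v y - v x| ^ p / r ^ ((d : ℝ) + p))) +
          ENNReal.ofReal (B * (|v x| ^ p * γ x ^ (-(β + p))) / r ^ (d : ℝ)) *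
            volume (ball x r) := by
          rw [lintegral_add_right _ measurable_const, setLIntegral_const,
            lintegral_const_mul' _ _ ENNReal.ofReal_ne_top]
      _ = _ := by
          congr 1
          -- The volume `r ^ d * V` of the ball cancels the factor `r ^ (-d)`.
          rw [Measure.addHaar_ball volume x h0.le, finrank_euclideanSpace, Fintype.card_fin,
            ← mul_assoc, ← ENNReal.ofReal_mul (by positivity), ← Real.rpow_natCast,
            div_mul_cancel₀ _ hrd.ne', ENNReal.ofReal_mul hB0.le, mul_right_comm]
  have hImeas : AEMeasurable I (volume.restrict (U \ Γ)) := by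
    have hγ : AEMeasurable γ (volume.restrict (U \ Γ)) := hL.continuousOn.aemeasurable hΩ
    exact ((hv.norm.pow_const p).aemeasurable.mul (hγ.pow_const _)).ennreal_ofReal
  have hBV : ENNReal.ofReal B * V ≠ ∞ := ENNReal.mul_ne_top ENNReal.ofReal_ne_top hVtop
  have hmain : (∫⁻ x in U \ Γ, ∫⁻ y in ball x (δ * etaD (U \ Γ) x),
        ENNReal.ofReal (γ x ^ (-(0 : ℝ)) * |v y * γ y ^ (-(β / p)) - v x * γ x ^ (-(β / p))| ^ p /
          (δ * etaD (U \ Γ) x) ^ ((d : ℝ) + p))) ≤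
      ENNReal.ofReal M * (∫⁻ x in U \ Γ, E x) +
        ENNReal.ofReal B * V * ∫⁻ x in U \ Γ, I x := by
    refine (setLIntegral_mono' hΩ hinner).trans_eq ?_
    rw [lintegral_add_right' _ (hImeas.const_mul _), lintegral_const_mul' _ _ ENNReal.ofReal_ne_top,
      lintegral_const_mul' _ _ hBV]
  unfold nlEnergy
  calc _ ≤ N * (ENNReal.ofReal M * (∫⁻ x in U \ Γ, E x) +
        ENNReal.ofReal B * V * ∫⁻ x in U \ Γ, I x) := by gcongr
    _ = ENNReal.ofReal M * (N * ∫⁻ x in U \ Γ, E x) +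
        N * (ENNReal.ofReal B * V) * ∫⁻ x in U \ Γ, I x := by ring
    _ ≤ T * (N * ∫⁻ x in U \ Γ, E x) + T * ∫⁻ x in U \ Γ, I x := by
        gcongr
        · exact le_self_add
        · exact le_add_self
    _ = T * (N * (∫⁻ x in U \ Γ, E x) + ∫⁻ x in U \ Γ, I x) := by ring
    _ ≤ _ := by gcongr

end
end

section
/- Let d ≥ 1, κ₁ > 0, τ > 0, c > 0 and δ > 0, and set q := 1/(1 + κ₁c/2) − c/δ. Let Ω ⊆ ℝ^d, let η : ℝ^d → [0,∞) be Lipschitz with constant κ₁, and let T : Ω → ℝ^d satisfy |T(x) − x| ≤ cτ/2 for all x ∈ Ω. Then for all x, y ∈ Ω: if |x − y| < q·δ·max{η(x), τ}, then |T(x) − T(y)| < δ·max{η(T(x)), τ}. -/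
/-!
Write `M = max (η x) τ`, `M' = max (η (T x)) τ` and `k = κ₁ c / 2`. The Lipschitz bound along the
displacement from `x` to `T x` gives `η x ≤ η (T x) + k τ`, hence `M ≤ (1 + k) M'`. The triangle
inequality gives `|T x - T y| ≤ |x - y| + c τ < δ M / (1 + k) - c M + c τ`, and the right-hand side
is at most `δ M'` because `τ ≤ M`: the term `-c/δ` in `q` pays for the displacements of both points,
the factor `1 / (1 + k)` for the change in `η`.
-/

open Metric Set

/-- **Lower interaction-range comparison under a transport map.** With
`q := 1/(1+κ₁c/2) - c/δ`, if `η` is `κ₁`-Lipschitz and `|T(x)-x| ≤ cτ/2` on `Ω`, then for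
all `x, y ∈ Ω`: `|x-y| < qδ max{η(x),τ}` implies `|T(x)-T(y)| < δ max{η(T(x)),τ}`. -/
theorem stmt15 (d : ℕ) (hd : 1 ≤ d) (κ₁ τ c δ : ℝ) (hκ₁ : 0 < κ₁) (hτ : 0 < τ)
    (hc : 0 < c) (hδ : 0 < δ) (q : ℝ) (hq : q = 1 / (1 + κ₁ * c / 2) - c / δ)
    (Ω : Set (EuclideanSpace ℝ (Fin d)))
    (η : EuclideanSpace ℝ (Fin d) → ℝ) (hηnn : ∀ x, 0 ≤ η x)
    (hηlip : LipschitzWith (Real.toNNReal κ₁) η)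
    (T : EuclideanSpace ℝ (Fin d) → EuclideanSpace ℝ (Fin d))
    (hT : ∀ x ∈ Ω, ‖T x - x‖ ≤ c * τ / 2) :
    ∀ x ∈ Ω, ∀ y ∈ Ω,
      ‖x - y‖ < q * δ * max (η x) τ → ‖T x - T y‖ < δ * max (η (T x)) τ := by
  intro x hx y hy hxy
  have hk : 0 < 1 + κ₁ * c / 2 := by positivity
  have hη : η x ≤ η (T x) + κ₁ * (c * τ / 2) := by
    have h := hηlip.dist_le_mul x (T x)
    rw [Real.coe_toNNReal _ hκ₁.le, Real.dist_eq, dist_comm, dist_eq_norm] at h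
    have h₁ := mul_le_mul_of_nonneg_left (hT x hx) hκ₁.le
    linarith [le_abs_self (η x - η (T x))]
  have hM : max (η x) τ ≤ max (η (T x)) τ * (1 + κ₁ * c / 2) := by
    have h₁ := le_max_left (η (T x)) τ
    have h₂ := le_max_right (η (T x)) τ
    have h₃ := mul_le_mul_of_nonneg_left h₂ (by positivity : 0 ≤ κ₁ * c / 2)
    have h₄ : 0 ≤ κ₁ * c / 2 * τ := by positivity
    exact max_le (by linarith) (by linarith)
  have hdiv : max (η x) τ / (1 + κ₁ * c / 2) ≤ max (η (T x)) τ := (div_le_iff₀ hk).2 hM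
  have hq' : q * δ * max (η x) τ
      = δ * (max (η x) τ / (1 + κ₁ * c / 2)) - c * max (η x) τ := by
    rw [hq]
    field_simp
  have htri : ‖T x - T y‖ ≤ ‖x - y‖ + c * τ := by
    have h : T x - T y = (T x - x) + (x - y) - (T y - y) := by abel
    rw [h]
    linarith [norm_sub_le ((T x - x) + (x - y)) (T y - y), norm_add_le (T x - x) (x - y),
      hT x hx, hT y hy]
  -- The displacement cost `c τ` is absorbed by the term `-c M`, because `τ ≤ M`.
  have hcτ := mul_le_mul_of_nonneg_left (le_max_right (η x) τ) hc.le
  have hδM := mul_le_mul_of_nonneg_left hdiv hδ.le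
  linarith
end

section
/- Let d ≥ 1, κ₁ > 0, τ > 0, c > 0 and δ > 0, and set Q := (1 + κ₁c/2)·(1 + c/δ). Let Ω ⊆ ℝ^d, let η : ℝ^d → [0,∞) be Lipschitz with constant κ₁, and let T : Ω → ℝ^d satisfy |T(x) − x| ≤ cτ/2 for all x ∈ Ω. Then for all x, y ∈ Ω: if |T(x) − T(y)| < δ·max{η(T(x)), τ}, then |x − y| < Q·δ·max{η(x), τ}. -/
/-!
Write `m = max (η x) τ`. The Lipschitz bound gives `max (η (T x)) τ ≤ (1 + κ₁ c / 2) m`, and two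
applications of the displacement bound give `‖x - y‖ ≤ c τ + ‖T x - T y‖`. Hence
`‖x - y‖ < c m + δ (1 + κ₁ c / 2) m ≤ (1 + κ₁ c / 2) (c + δ) m`, and the last coefficient is `Q δ`.
-/

open Metric Set

/-- **Upper interaction-range comparison under a transport map.** With
`Q := (1+κ₁c/2)(1+c/δ)`, if `η` is `κ₁`-Lipschitz and `|T(x)-x| ≤ cτ/2` on `Ω`, then for
all `x, y ∈ Ω`: `|T(x)-T(y)| < δ max{η(T(x)),τ}` implies `|x-y| < Qδ max{η(x),τ}`. -/
theorem stmt16 (d : ℕ) (hd : 1 ≤ d) (κ₁ τ c δ : ℝ) (hκ₁ : 0 < κ₁) (hτ : 0 < τ)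
    (hc : 0 < c) (hδ : 0 < δ) (Q : ℝ) (hQ : Q = (1 + κ₁ * c / 2) * (1 + c / δ))
    (Ω : Set (EuclideanSpace ℝ (Fin d)))
    (η : EuclideanSpace ℝ (Fin d) → ℝ) (hηnn : ∀ x, 0 ≤ η x)
    (hηlip : LipschitzWith (Real.toNNReal κ₁) η)
    (T : EuclideanSpace ℝ (Fin d) → EuclideanSpace ℝ (Fin d))
    (hT : ∀ x ∈ Ω, ‖T x - x‖ ≤ c * τ / 2) :
    ∀ x ∈ Ω, ∀ y ∈ Ω,
      ‖T x - T y‖ < δ * max (η (T x)) τ → ‖x - y‖ < Q * δ * max (η x) τ := by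
  intro x hx y hy h
  have hm : τ ≤ max (η x) τ := le_max_right _ _
  have hηx : η x ≤ max (η x) τ := le_max_left _ _
  have hlip : η (T x) ≤ η x + κ₁ * (c * τ / 2) := by
    have h1 := hηlip.dist_le_mul (T x) x
    rw [Real.coe_toNNReal κ₁ hκ₁.le, Real.dist_eq, dist_eq_norm] at h1
    have h2 := mul_le_mul_of_nonneg_left (hT x hx) hκ₁.le
    linarith [le_abs_self (η (T x) - η x)]
  -- Displacing `x` by at most `c * τ / 2` enlarges the range by at most `1 + κ₁ * c / 2`.
  have hmax : max (η (T x)) τ ≤ (1 + κ₁ * c / 2) * max (η x) τ := by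
    have hκm := mul_le_mul_of_nonneg_left hm (by positivity : 0 ≤ κ₁ * c / 2)
    have hκτ : 0 ≤ κ₁ * c / 2 * τ := by positivity
    apply max_le <;> linarith
  have htri : ‖x - y‖ ≤ c * τ + ‖T x - T y‖ := by
    have e : x - y = (T y - y) - (T x - x) + (T x - T y) := by abel
    have h1 : ‖x - y‖ ≤ ‖(T y - y) - (T x - x)‖ + ‖T x - T y‖ := by
      rw [e]; exact norm_add_le _ _
    linarith [norm_sub_le (T y - y) (T x - x), hT x hx, hT y hy]
  have hQδ : Q * δ = (1 + κ₁ * c / 2) * (c + δ) := by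
    rw [hQ]; field_simp; ring
  have hδmax := mul_le_mul_of_nonneg_left hmax hδ.le
  have hcm := mul_le_mul_of_nonneg_left hm hc.le
  have hpos : 0 ≤ κ₁ * c / 2 * c * max (η x) τ :=
    mul_nonneg (by positivity) (hτ.le.trans hm)
  rw [hQδ]
  linarith
end

section
/- Assume the domain and weight setting below with d ≥ 1, p ∈ (1,∞), and β < d, and let ρ : ℝ → [0,∞) be bounded, measurable, nonnegative, vanishing outside (−1,1), and normalized so that ∫_{B(0,1)} |z|^p ρ(|z|) dz = C̄_{d,p} := √π·Γ((d+p)/2)/(Γ((p+1)/2)·Γ(d/2)). Let u : Ω → ℝ be Lipschitz. Then, with ∇u(x) denoting the gradient of u at the (Lebesgue-almost every) point x ∈ Ω where u is differentiable, lim_{δ→0⁺} ∫_Ω ∫_Ω γ(x)^{−β} ρ(|y−x|/(δη(x))) |u(y)−u(x)|^p (δη(x))^{−(d+p)} dy dx = ∫_Ω |∇u(x)|^p γ(x)^{−β} dx. -/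
/-!
For `x ∈ Ω` and `0 < δ < 1`, put `t = δ η(x)`. Then `ball x t ⊆ Ω`, and substituting `y = x + t z`
turns the inner integral into `γ(x)^{-β} ∫ ρ(|z|) |(u(x + t z) - u(x)) / t|^p dz`
(`inner_integral_eq`). The difference quotient is at most `K |z|`, so this is bounded by
`K^p C̄_{d,p} γ(x)^{-β}`, which is integrable because `β < d`, `γ` is bounded, and `γ` is at least a
multiple of the distance to the finite set `Γ` (`integrableOn_weight`). By Rademacher's theorem `u` is
differentiable almost everywhere, and at such points dominated convergence gives the limit
`γ(x)^{-β} ∫ ρ(|z|) |∇u(x) · z|^p dz` (`tendsto_inner_integral`). A second application of dominated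
convergence, in `x`, finishes the proof once this last integral is known to be `|∇u(x)|^p`
(`integral_kernel_inner_rpow`).

In polar coordinates `∫ ρ(|z|) |a · z|^p dz` and `∫ ρ(|z|) |z|^p dz` are spherical integrals times
a common radial factor, so their ratio does not depend on `ρ` and can be computed
with a Gaussian in place of `ρ`, where both integrals are explicit Gamma values. The ratio is
`|a|^p / C̄_{d,p}`.
-/

open MeasureTheory Metric Set Filter
open scoped ENNReal NNReal Topology

noncomputable section

/-! ### Spherical moments and the normalizing constant -/

/-- Integration in polar coordinates of a radial factor times a `p`-homogeneous function. -/
lemma integral_radial_mul_homogeneous {d : ℕ} (hd : 1 ≤ d) (p : ℝ) (h : Euc d → ℝ)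
    (hh : ∀ r : ℝ, 0 < r → ∀ z, h (r • z) = r ^ p * h z) (g : ℝ → ℝ) :
    ∫ z : Euc d, g ‖z‖ * h z =
      (∫ ω, h ω.1 ∂(volume : Measure (Euc d)).toSphere) *
        ∫ r : Ioi (0 : ℝ), g r.1 * r.1 ^ p ∂(Measure.volumeIoiPow (d - 1)) := by
  have : Nonempty (Fin d) := ⟨⟨0, hd⟩⟩
  have hfr : Module.finrank ℝ (Euc d) = d := by simp
  rw [← integral_prod_mul (fun ω : sphere (0 : Euc d) 1 => h ω.1)
    (fun r : Ioi (0 : ℝ) => g r.1 * r.1 ^ p)]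
  have key := (volume : Measure (Euc d)).measurePreserving_homeomorphUnitSphereProd.integral_comp
    (Homeomorph.measurableEmbedding _)
    (fun q : sphere (0 : Euc d) 1 × Ioi (0 : ℝ) => h q.1.1 * (g q.2.1 * q.2.1 ^ p))
  rw [hfr] at key
  rw [← key]
  have hsub := integral_subtype_comap (μ := (volume : Measure (Euc d)))
    (measurableSet_singleton (0 : Euc d)).compl (fun z => g ‖z‖ * h z)
  rw [restrict_compl_singleton] at hsub
  rw [← hsub]
  refine integral_congr_ae (Eventually.of_forall fun z => ?_)
  have hz : 0 < ‖z.1‖ := norm_pos_iff.2 z.2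
  have h1 := hh ‖z.1‖ hz (‖z.1‖⁻¹ • z.1)
  rw [smul_inv_smul₀ hz.ne'] at h1
  simp only [homeomorphUnitSphereProd_apply_fst_coe, homeomorphUnitSphereProd_apply_snd_coe]
  rw [h1]
  ring

/-- The radial Gaussian moment of order `p`. -/
lemma integral_gaussian_norm_rpow {d : ℕ} (hd : 1 ≤ d) {p : ℝ} (hp : 1 < p) :
    ∫ z : Euc d, Real.exp (-‖z‖ ^ (2 : ℝ)) * ‖z‖ ^ p =
      √Real.pi ^ d * Real.Gamma (((d : ℝ) + p) / 2) / Real.Gamma ((d : ℝ) / 2) := by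
  have : Nonempty (Fin d) := ⟨⟨0, hd⟩⟩
  have hd0 : (0 : ℝ) < d := by exact_mod_cast hd
  rw [integral_fun_norm_addHaar volume (fun r : ℝ => Real.exp (-r ^ (2 : ℝ)) * r ^ p)]
  have h1 : ∫ y in Ioi (0 : ℝ), y ^ (Module.finrank ℝ (Euc d) - 1) •
      (Real.exp (-y ^ (2 : ℝ)) * y ^ p) = 1 / 2 * Real.Gamma (((d : ℝ) + p) / 2) := by
    have := integral_rpow_mul_exp_neg_rpow (p := 2) (q := (d : ℝ) - 1 + p) two_pos (by linarith)
    rw [show ((d : ℝ) - 1 + p + 1) = d + p by ring] at this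
    rw [← this]
    refine setIntegral_congr_fun measurableSet_Ioi fun y hy => ?_
    have hy' : (0 : ℝ) < y := hy
    simp only [smul_eq_mul, finrank_euclideanSpace, Fintype.card_fin]
    rw [Real.rpow_add hy', ← Real.rpow_natCast, Nat.cast_sub hd]
    push_cast
    ring
  rw [h1, measureReal_def, EuclideanSpace.volume_ball]
  simp only [finrank_euclideanSpace, Fintype.card_fin, nsmul_eq_mul, smul_eq_mul,
    ENNReal.ofReal_one, one_pow, one_mul]
  rw [ENNReal.toReal_ofReal (by positivity), Real.Gamma_add_one (by positivity)]
  have := (Real.Gamma_pos_of_pos (s := (d : ℝ) / 2) (by positivity)).ne'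
  field_simp

/-- The Gaussian moment of order `p` of a linear functional: by rotation invariance the functional
may be taken to be a multiple of a coordinate, and then Fubini applies. -/
lemma integral_gaussian_inner_rpow {d : ℕ} (hd : 1 ≤ d) {p : ℝ} (hp : 1 < p) (a : Euc d) :
    ∫ z : Euc d, Real.exp (-‖z‖ ^ (2 : ℝ)) * |inner ℝ a z| ^ p =
      ‖a‖ ^ p * (Real.Gamma ((p + 1) / 2) * √Real.pi ^ (d - 1)) := by
  rcases eq_or_ne a 0 with rfl | ha
  · simp [Real.zero_rpow (by linarith : p ≠ 0)]
  have ha' : 0 < ‖a‖ := norm_pos_iff.2 ha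
  let i0 : Fin d := ⟨0, hd⟩
  obtain ⟨b, hb⟩ := Orthonormal.exists_orthonormalBasis_extension_of_card_eq (𝕜 := ℝ)
    (ι := Fin d) (E := Euc d) (by simp) (v := fun _ => ‖a‖⁻¹ • a) (s := {i0})
    (by
      refine ⟨fun i => by simp [norm_smul, ha'.ne'], fun i j hij => ?_⟩
      exact absurd (Subsingleton.elim i j) hij)
  have hb0 : b i0 = ‖a‖⁻¹ • a := hb i0 rfl
  have hin : ∀ z, inner ℝ a z = ‖a‖ * b.repr z i0 := by
    intro z
    rw [b.repr_apply_apply, hb0, real_inner_smul_left]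
    field_simp
  have e1 : ∫ z : Euc d, Real.exp (-‖z‖ ^ (2 : ℝ)) * |inner ℝ a z| ^ p =
      ∫ w : Euc d, Real.exp (-‖w‖ ^ (2 : ℝ)) * |‖a‖ * w i0| ^ p := by
    have := b.measurePreserving_repr.integral_comp b.repr.toHomeomorph.measurableEmbedding
      (fun w : Euc d => Real.exp (-‖w‖ ^ (2 : ℝ)) * |‖a‖ * w i0| ^ p)
    rw [← this]
    simp [hin]
  rw [e1, ← (PiLp.volume_preserving_toLp (Fin d)).integral_comp
    (MeasurableEquiv.toLp 2 (Fin d → ℝ)).measurableEmbedding]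
  have e2 : ∀ v : Fin d → ℝ, Real.exp (-‖(WithLp.toLp 2 v : Euc d)‖ ^ (2 : ℝ)) *
      |‖a‖ * (WithLp.toLp 2 v : Euc d) i0| ^ p =
      ‖a‖ ^ p * ∏ i, (Real.exp (-|v i| ^ (2 : ℝ)) * if i = i0 then |v i| ^ p else 1) := by
    intro v
    rw [Finset.prod_mul_distrib, Finset.prod_ite_eq' Finset.univ i0, ← Real.exp_sum, abs_mul,
      Real.mul_rpow (abs_nonneg _) (abs_nonneg _), abs_of_pos ha']
    have : ‖(WithLp.toLp 2 v : Euc d)‖ ^ (2 : ℝ) = ∑ i, |v i| ^ (2 : ℝ) := by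
      simp [EuclideanSpace.norm_sq_eq]
    rw [this]
    simp
    ring
  simp_rw [e2]
  rw [integral_const_mul, integral_fintype_prod_volume_eq_prod
    (fun i (t : ℝ) => Real.exp (-|t| ^ (2 : ℝ)) * if i = i0 then |t| ^ p else 1)]
  congr 1
  rw [← Finset.mul_prod_erase Finset.univ _ (Finset.mem_univ i0)]
  congr 1
  · simp only [if_true]
    rw [integral_comp_abs (f := fun t => Real.exp (-t ^ (2 : ℝ)) * t ^ p)]
    have := integral_rpow_mul_exp_neg_rpow (p := 2) (q := p) two_pos (by linarith)
    simp_rw [mul_comm (Real.exp _)]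
    rw [this]; ring
  · rw [Finset.prod_congr rfl (g := fun _ => √Real.pi)]
    · simp
    · intro i hi
      simp only [Finset.ne_of_mem_erase hi, if_false, mul_one]
      have := integral_gaussian 1
      simpa using this

/-- The normalization of the kernel makes the `ρ`-weighted integral of `|⟪a, z⟫|^p` equal to `‖a‖^p`. -/
lemma integral_kernel_inner_rpow {d : ℕ} (hd : 1 ≤ d) {p : ℝ} (hp : 1 < p) (ρ : ℝ → ℝ)
    (hρ : ∫ z : Euc d, ρ ‖z‖ * ‖z‖ ^ p = Cbar d p) (a : Euc d) :
    ∫ z : Euc d, ρ ‖z‖ * |inner ℝ a z| ^ p = ‖a‖ ^ p := by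
  have hI : ∀ r : ℝ, 0 < r → ∀ z : Euc d, ‖r • z‖ ^ p = r ^ p * ‖z‖ ^ p := by
    intro r hr z
    rw [norm_smul, Real.mul_rpow (norm_nonneg _) (norm_nonneg _), Real.norm_of_nonneg hr.le]
  have hJ : ∀ r : ℝ, 0 < r → ∀ z : Euc d,
      |inner ℝ a (r • z)| ^ p = r ^ p * |inner ℝ a z| ^ p := by
    intro r hr z
    rw [real_inner_smul_right, abs_mul, Real.mul_rpow (abs_nonneg _) (abs_nonneg _),
      abs_of_pos hr]
  have hG1 := integral_radial_mul_homogeneous hd p (fun z => ‖z‖ ^ p) hI (fun r => Real.exp (-r ^ (2 : ℝ)))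
  have hG2 := integral_radial_mul_homogeneous hd p (fun z => |inner ℝ a z| ^ p) hJ (fun r => Real.exp (-r ^ (2 : ℝ)))
  have hR1 := integral_radial_mul_homogeneous hd p (fun z => ‖z‖ ^ p) hI ρ
  have hR2 := integral_radial_mul_homogeneous hd p (fun z => |inner ℝ a z| ^ p) hJ ρ
  rw [integral_gaussian_norm_rpow hd hp] at hG1
  rw [integral_gaussian_inner_rpow hd hp] at hG2
  rw [hρ] at hR1
  rw [hR2]
  have hd0 : (0 : ℝ) < d := by exact_mod_cast hd
  have g1 := Real.Gamma_pos_of_pos (s := (d : ℝ) / 2) (by positivity)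
  have g2 := Real.Gamma_pos_of_pos (s := ((d : ℝ) + p) / 2) (by positivity)
  have g3 := Real.Gamma_pos_of_pos (s := (p + 1) / 2) (by positivity)
  have hpi : 0 < √Real.pi := Real.sqrt_pos.2 Real.pi_pos
  have hpow : √Real.pi ^ d = √Real.pi * √Real.pi ^ (d - 1) := by
    rw [← pow_succ', Nat.sub_add_cancel hd]
  set σ := ∫ ω : sphere (0 : Euc d) 1, ‖ω.1‖ ^ p ∂(volume : Measure (Euc d)).toSphere
  set S := ∫ ω : sphere (0 : Euc d) 1, |inner ℝ a ω.1| ^ p ∂(volume : Measure (Euc d)).toSphere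
  set A := ∫ r : Ioi (0 : ℝ), ρ r.1 * r.1 ^ p ∂(Measure.volumeIoiPow (d - 1))
  set B := ∫ r : Ioi (0 : ℝ), Real.exp (-r.1 ^ (2 : ℝ)) * r.1 ^ p
    ∂(Measure.volumeIoiPow (d - 1))
  have hσB : σ * B ≠ 0 := by rw [← hG1]; positivity
  have hpos : 0 < Real.Gamma ((p + 1) / 2) * √Real.pi ^ (d - 1) := by positivity
  -- Eliminate the unknown sphere integrals against the two Gaussian moments.
  have h1 : (S * A) * (σ * B) = (S * B) * (σ * A) := by ring
  rw [← hG1, ← hG2, ← hR1, Cbar, hpow] at h1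
  field_simp at h1
  linarith

/-! ### Integrability of the weight -/

lemma integrableOn_norm_sub_rpow {d : ℕ} (hd : 1 ≤ d) {β : ℝ} (hβ : β < d) {Ω : Set (Euc d)}
    (hb : Bornology.IsBounded Ω) (g : Euc d) :
    IntegrableOn (fun x => ‖x - g‖ ^ (-β)) Ω := by
  have : Nonempty (Fin d) := ⟨⟨0, hd⟩⟩
  obtain ⟨R, hR0, hR⟩ := hb.subset_ball_lt 0 g
  have h0 : IntegrableOn (fun x : Euc d => ‖x‖ ^ (-β)) (ball 0 R) := by
    rw [integrableOn_fun_norm_addHaar volume (f := fun r : ℝ => r ^ (-β))]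
    have h1 := (intervalIntegral.integrableOn_Ioo_rpow_iff (s := (d : ℝ) - 1 - β) hR0).2
      (by linarith)
    refine h1.congr_fun (fun y hy => ?_) measurableSet_Ioo
    have hy' : (0 : ℝ) < y := hy.1
    simp only [smul_eq_mul, finrank_euclideanSpace, Fintype.card_fin]
    rw [sub_eq_add_neg _ β, Real.rpow_add hy', ← Real.rpow_natCast, Nat.cast_sub hd]
    push_cast
    rfl
  have h2 := ((measurePreserving_sub_right (volume : Measure (Euc d)) g).integrableOn_comp_preimage
    (Homeomorph.subRight g).measurableEmbedding (f := fun x : Euc d => ‖x‖ ^ (-β))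
    (s := ball 0 R)).2 h0
  refine h2.mono_set fun x hx => ?_
  simpa [dist_eq_norm] using hR hx

/-- The weight `γ^{-β}` is integrable: for `β ≤ 0` it is bounded, and for `0 < β < d` it is
dominated by the integrable singularities `‖x - g‖^{-β}` at the finitely many points `g ∈ Γ`. -/
lemma integrableOn_weight {d : ℕ} (hd : 1 ≤ d) {β κ₀ : ℝ} (hβ : β < d) (hκ₀ : 1 ≤ κ₀)
    {Ω Γ : Set (Euc d)} (hΩ : MeasurableSet Ω) (hb : Bornology.IsBounded Ω) (hΓfin : Γ.Finite)
    (hΓne : Γ.Nonempty) (hdisj : ∀ x ∈ Ω, x ∉ Γ) {γ : Euc d → ℝ} (hc : Continuous γ)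
    (hpos : ∀ x ∈ Ω, 0 < γ x) (hdist : ∀ x ∈ Ω, infDist x Γ ≤ κ₀ * γ x) :
    IntegrableOn (fun x => γ x ^ (-β)) Ω := by
  have hmeas : AEStronglyMeasurable (fun x => γ x ^ (-β)) (volume.restrict Ω) :=
    (hc.measurable.pow_const _).aestronglyMeasurable
  rcases le_or_gt β 0 with h | h
  · obtain ⟨C, hC⟩ := (hb.isCompact_closure).exists_bound_of_continuousOn hc.continuousOn
    refine Measure.integrableOn_of_bounded (M := C ^ (-β)) hb.measure_lt_top.ne
      (hc.measurable.pow_const _).aestronglyMeasurable ?_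
    filter_upwards [ae_restrict_mem hΩ] with x hx
    rw [Real.norm_of_nonneg (Real.rpow_nonneg (hpos x hx).le _)]
    exact Real.rpow_le_rpow (hpos x hx).le
      ((le_abs_self _).trans (hC x (subset_closure hx))) (by linarith)
  · have hdom : IntegrableOn (fun x => κ₀ ^ β * ∑ g ∈ hΓfin.toFinset, ‖x - g‖ ^ (-β)) Ω :=
      (integrable_finsetSum _ fun g _ => integrableOn_norm_sub_rpow hd hβ hb g).const_mul _
    refine Integrable.mono' hdom hmeas ?_
    filter_upwards [ae_restrict_mem hΩ] with x hx
    rw [Real.norm_of_nonneg (Real.rpow_nonneg (hpos x hx).le _)]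
    obtain ⟨g, hg, hgd⟩ := hΓfin.isCompact.exists_infDist_eq_dist hΓne x
    have hne : x ≠ g := fun e => hdisj x hx (e ▸ hg)
    have hd0 : 0 < ‖x - g‖ := norm_pos_iff.2 (sub_ne_zero.2 hne)
    have hκ : 0 < κ₀ := by linarith
    have hle : ‖x - g‖ / κ₀ ≤ γ x := by
      rw [div_le_iff₀ hκ, ← dist_eq_norm, ← hgd, mul_comm]
      exact hdist x hx
    calc γ x ^ (-β) ≤ (‖x - g‖ / κ₀) ^ (-β) :=
          Real.rpow_le_rpow_of_nonpos (by positivity) hle (by linarith)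
      _ = κ₀ ^ β * ‖x - g‖ ^ (-β) := by
          rw [Real.div_rpow hd0.le hκ.le, Real.rpow_neg hκ.le, div_inv_eq_mul, mul_comm]
      _ ≤ _ := by
          gcongr
          exact Finset.single_le_sum (f := fun g => ‖x - g‖ ^ (-β))
            (fun _ _ => by positivity) (hΓfin.mem_toFinset.2 hg)

/-! ### Rescaling and the pointwise limit -/

/-- A ball about a point of `Ω` that misses `∂Ω` is connected, so it cannot leave `Ω`. -/
lemma ball_infDist_frontier_subset {d : ℕ} {Ω : Set (Euc d)} {x : Euc d} (hx : x ∈ Ω) :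
    ball x (infDist x (frontier Ω)) ⊆ Ω := by
  intro y hy
  by_contra hyΩ
  have hpre : IsPreconnected (ball x (infDist x (frontier Ω))) :=
    (convex_ball _ _).isPreconnected
  have hx' : x ∈ ball x (infDist x (frontier Ω)) :=
    mem_ball_self (dist_nonneg.trans_lt (mem_ball.1 hy))
  have hne : (ball x (infDist x (frontier Ω)) ∩ frontier Ω).Nonempty := by
    by_contra hemp
    rw [not_nonempty_iff_eq_empty] at hemp
    have hsub : ball x (infDist x (frontier Ω)) ⊆ interior Ω ∪ interior Ωᶜ := by
      intro z hz
      have hzf : z ∉ frontier Ω := fun h => eq_empty_iff_forall_notMem.1 hemp z ⟨hz, h⟩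
      rw [interior_compl]
      by_cases hzc : z ∈ closure Ω
      · exact Or.inl (by_contra fun h => hzf ⟨hzc, h⟩)
      · exact Or.inr hzc
    have hxi : x ∈ interior Ω := (hsub hx').resolve_right fun h => interior_subset h hx
    have hyi : y ∈ interior Ωᶜ := (hsub hy).resolve_left fun h => hyΩ (interior_subset h)
    obtain ⟨z, -, hz1, hz2⟩ := hpre _ _ isOpen_interior isOpen_interior hsub
      ⟨x, hx', hxi⟩ ⟨y, hy, hyi⟩
    exact interior_subset hz2 (interior_subset hz1)
  obtain ⟨w, hwb, hwf⟩ := hne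
  exact absurd (infDist_le_dist_of_mem hwf) (not_le.2 (mem_ball'.1 hwb))

/-- The rescaling `y = x + t z` of the inner integral. The kernel vanishes off `ball x t ⊆ Ω`, so
the domain of integration can be taken to be the whole space. -/
lemma inner_integral_eq {d : ℕ} {p c t : ℝ} (ht : 0 < t) {Ω : Set (Euc d)}
    (hΩ : MeasurableSet Ω) {x : Euc d} (hx : x ∈ Ω) (hball : ball x t ⊆ Ω) {ρ : ℝ → ℝ}
    (hρsupp : ∀ x : ℝ, 1 ≤ |x| → ρ x = 0) {u v : Euc d → ℝ} (huv : EqOn u v Ω) :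
    ∫ y in Ω, c * ρ (‖y - x‖ / t) * |u y - u x| ^ p / t ^ ((d : ℝ) + p) =
      c * ∫ z, ρ ‖z‖ * |(v (x + t • z) - v x) / t| ^ p := by
  set F : Euc d → ℝ := fun y => c * ρ (‖y - x‖ / t) * |v y - v x| ^ p / t ^ ((d : ℝ) + p)
  have h1 : ∫ y in Ω, c * ρ (‖y - x‖ / t) * |u y - u x| ^ p / t ^ ((d : ℝ) + p) =
      ∫ y, F y := by
    rw [← setIntegral_eq_integral_of_forall_compl_eq_zero (s := Ω) (f := F)]
    · refine setIntegral_congr_fun hΩ fun y hy => ?_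
      simp only [F, huv hy, huv hx]
    · intro y hy
      have : ρ (‖y - x‖ / t) = 0 := by
        apply hρsupp
        rw [abs_of_nonneg (by positivity), one_le_div ht, ← dist_eq_norm]
        by_contra hlt
        exact hy (hball (mem_ball.2 (not_le.1 hlt)))
      simp [F, this]
  have h2 := Measure.integral_comp_smul (volume : Measure (Euc d)) (fun z => F (x + z)) t
  rw [integral_add_left_eq_self F x] at h2
  have h3 : ∫ y, F y = t ^ d * ∫ z, F (x + t • z) := by
    rw [h2, finrank_euclideanSpace, Fintype.card_fin, abs_of_pos (by positivity), smul_eq_mul]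
    field_simp
  rw [h1, h3, ← integral_const_mul, ← integral_const_mul]
  refine integral_congr_ae (Eventually.of_forall fun z => ?_)
  simp only [F, add_sub_cancel_left, norm_smul, Real.norm_of_nonneg ht.le,
    mul_div_cancel_left₀ _ ht.ne']
  rw [abs_div, abs_of_pos ht, Real.div_rpow (abs_nonneg _) ht.le, Real.rpow_add ht,
    Real.rpow_natCast]
  field_simp

lemma difference_quotient_rpow_le {d : ℕ} {p t : ℝ} (hp : 1 < p) (ht : 0 < t) {v : Euc d → ℝ}
    {K : ℝ≥0} (hv : LipschitzWith K v) (x z : Euc d) :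
    |(v (x + t • z) - v x) / t| ^ p ≤ (K : ℝ) ^ p * ‖z‖ ^ p := by
  rw [← Real.mul_rpow K.coe_nonneg (norm_nonneg _)]
  refine Real.rpow_le_rpow (abs_nonneg _) ?_ (by linarith)
  rw [abs_div, abs_of_pos ht, div_le_iff₀ ht]
  have := hv.dist_le_mul (x + t • z) x
  rw [Real.dist_eq, dist_eq_norm, add_sub_cancel_left, norm_smul, Real.norm_of_nonneg ht.le] at this
  linarith

/-- Localization at a point of differentiability: the difference quotients converge to the
directional derivatives, and the Lipschitz bound dominates them. -/
lemma tendsto_inner_integral {d : ℕ} (hd : 1 ≤ d) {p : ℝ} (hp : 1 < p) {ρ : ℝ → ℝ}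
    (hρnn : ∀ x, 0 ≤ ρ x) (hρmeas : Measurable ρ)
    (hρint : Integrable fun z : Euc d => ρ ‖z‖ * ‖z‖ ^ p)
    (hρ : ∫ z : Euc d, ρ ‖z‖ * ‖z‖ ^ p = Cbar d p)
    {v : Euc d → ℝ} {K : ℝ≥0} (hv : LipschitzWith K v) {x : Euc d}
    (hx : DifferentiableAt ℝ v x) :
    Tendsto (fun t : ℝ => ∫ z, ρ ‖z‖ * |(v (x + t • z) - v x) / t| ^ p) (𝓝[>] 0)
      (𝓝 (‖fderiv ℝ v x‖ ^ p)) := by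
  set a : Euc d := (InnerProductSpace.toDual ℝ (Euc d)).symm (fderiv ℝ v x)
  have ha : ∀ z, inner ℝ a z = fderiv ℝ v x z := fun z =>
    InnerProductSpace.toDual_symm_apply
  have hna : ‖a‖ = ‖fderiv ℝ v x‖ := LinearIsometryEquiv.norm_map _ _
  rw [← hna, ← integral_kernel_inner_rpow hd hp ρ hρ a]
  have hvm := hv.continuous.measurable
  refine tendsto_integral_filter_of_dominated_convergence
    (fun z => (K : ℝ) ^ p * (ρ ‖z‖ * ‖z‖ ^ p)) ?_ ?_ (hρint.const_mul _) ?_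
  · exact Eventually.of_forall fun t => Measurable.aestronglyMeasurable (by fun_prop)
  · filter_upwards [self_mem_nhdsWithin] with t ht
    refine Eventually.of_forall fun z => ?_
    have h := difference_quotient_rpow_le hp ht hv x z
    rw [Real.norm_of_nonneg (mul_nonneg (hρnn _) (by positivity))]
    nlinarith [mul_le_mul_of_nonneg_left h (hρnn ‖z‖)]
  · refine Eventually.of_forall fun z => ?_
    have hl := (hx.hasFDerivAt.hasLineDerivAt z).tendsto_slope_zero_right
    rw [← ha] at hl
    refine ((hl.abs.rpow_const (Or.inr (by linarith))).const_mul (ρ ‖z‖)).congr fun t => ?_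
    simp [div_eq_inv_mul]

/-! ### Passage to the limit -/

/-- **Localization of the nonlocal energy** (Bourgain–Brezis–Mironescu-type limit). For
`β < d`, a kernel `ρ` normalized by `∫_{B(0,1)} |z|^p ρ(|z|) dz = C̄_{d,p}`, and a Lipschitz
`u : Ω → ℝ`, one has
`lim_{δ→0⁺} ∬ γ(x)^{-β} ρ(|y-x|/(δη(x))) |u(y)-u(x)|^p (δη(x))^{-(d+p)} dy dx
  = ∫_Ω |∇u(x)|^p γ(x)^{-β} dx`. -/
theorem stmt19 (d : ℕ) (hd : 1 ≤ d) (p β κ₀ κ₁ : ℝ) (hp : 1 < p) (hβ : β < (d : ℝ))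
    (hκ₀ : 1 ≤ κ₀) (hκ₁ : 1 ≤ κ₁)
    (Ωstar Γ : Set (Euc d)) (hΩopen : IsOpen Ωstar) (hΩbdd : Bornology.IsBounded Ωstar)
    (hΓfin : Γ.Finite) (hΓne : Γ.Nonempty) (hΓsub : Γ ⊆ closure Ωstar)
    (γ : Euc d → ℝ) (hγpos : ∀ x ∈ Ωstar \ Γ, 0 < γ x)
    (hγlip : LipschitzOnWith (Real.toNNReal κ₁) γ (Ωstar \ Γ))
    (hγdist : ∀ x ∈ Ωstar \ Γ, Metric.infDist x Γ ≤ κ₀ * γ x)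
    (ρ : ℝ → ℝ) (hρnn : ∀ x, 0 ≤ ρ x) (hρmeas : Measurable ρ)
    (hρbdd : ∃ M : ℝ, ∀ x, ρ x ≤ M) (hρsupp : ∀ x : ℝ, 1 ≤ |x| → ρ x = 0)
    (hρnorm : ∫ z in ball (0 : Euc d) 1, ‖z‖ ^ p * ρ ‖z‖ = Cbar d p)
    (u : Euc d → ℝ) (K : ℝ≥0) (hu : LipschitzOnWith K u (Ωstar \ Γ)) :
    Tendsto
      (fun δ : ℝ =>
        ∫ x in Ωstar \ Γ, ∫ y in Ωstar \ Γ,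
          γ x ^ (-β) * ρ (‖y - x‖ / (δ * etaD (Ωstar \ Γ) x)) * |u y - u x| ^ p /
            (δ * etaD (Ωstar \ Γ) x) ^ ((d : ℝ) + p))
      (nhdsWithin 0 (Set.Ioi 0))
      (nhds (∫ x in Ωstar \ Γ, ‖fderivWithin ℝ u (Ωstar \ Γ) x‖ ^ p * γ x ^ (-β))) := by
  set Ω : Set (Euc d) := Ωstar \ Γ with hΩdef
  have hΩo : IsOpen Ω := hΩopen.sdiff hΓfin.isClosed
  have hΩm : MeasurableSet Ω := hΩo.measurableSet
  have hΩb : Bornology.IsBounded Ω := hΩbdd.subset sdiff_subset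
  have hd0 : (0 : ℝ) < d := by exact_mod_cast hd
  -- `u` and `γ` are unconstrained outside `Ω`; Lipschitz extensions restore measurability there.
  obtain ⟨v, hv, huv⟩ := hu.extend_real
  obtain ⟨w, hw, hγw⟩ := hγlip.extend_real
  have hvm := hv.continuous.measurable
  have hwm := hw.continuous.measurable
  have hwint : IntegrableOn (fun x => w x ^ (-β)) Ω :=
    integrableOn_weight hd hβ hκ₀ hΩm hΩb hΓfin hΓne (fun x hx => hx.2) hw.continuous
      (fun x hx => hγw hx ▸ hγpos x hx) (fun x hx => hγw hx ▸ hγdist x hx)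
  have hwnn : ∀ x ∈ Ω, 0 ≤ w x ^ (-β) := fun x hx =>
    Real.rpow_nonneg (hγw hx ▸ (hγpos x hx).le) _
  have hρ : ∫ z : Euc d, ρ ‖z‖ * ‖z‖ ^ p = Cbar d p := by
    rw [← hρnorm, ← setIntegral_eq_integral_of_forall_compl_eq_zero (s := ball (0 : Euc d) 1)]
    · simp_rw [mul_comm]
    · intro z hz
      rw [hρsupp ‖z‖ (by simpa using hz), zero_mul]
  have hC : 0 < Cbar d p := by
    have g1 := Real.Gamma_pos_of_pos (s := (d : ℝ) / 2) (by positivity)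
    have g2 := Real.Gamma_pos_of_pos (s := ((d : ℝ) + p) / 2) (by positivity)
    have g3 := Real.Gamma_pos_of_pos (s := (p + 1) / 2) (by positivity)
    have := Real.pi_pos
    unfold Cbar
    positivity
  -- A non-integrable function would have integral `0`, whereas `Cbar d p > 0`.
  have hρint : Integrable fun z : Euc d => ρ ‖z‖ * ‖z‖ ^ p := by
    by_contra h
    rw [integral_undef h] at hρ
    exact hC.ne hρ
  have hηpos : ∀ x ∈ Ω, 0 < etaD Ω x := by
    intro x hx
    have hfne : (frontier Ω).Nonempty := by
      have : Nonempty (Fin d) := ⟨⟨0, hd⟩⟩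
      rw [nonempty_frontier_iff]
      exact ⟨⟨x, hx⟩, fun h => NormedSpace.unbounded_univ ℝ (Euc d) (h ▸ hΩb)⟩
    refine (isClosed_frontier.notMem_iff_infDist_pos hfne).1 fun hf => ?_
    exact hf.2 (hΩo.interior_eq.symm ▸ hx)
  have hηc : Measurable (etaD Ω) := (continuous_infDist_pt _).measurable
  set G : ℝ → Euc d → ℝ := fun δ x =>
    w x ^ (-β) * ∫ z, ρ ‖z‖ * |(v (x + (δ * etaD Ω x) • z) - v x) / (δ * etaD Ω x)| ^ p with hG
  have hFG : ∀ δ ∈ Ioo (0 : ℝ) 1, ∫ x in Ω, G δ x = ∫ x in Ω, ∫ y in Ω,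
      γ x ^ (-β) * ρ (‖y - x‖ / (δ * etaD Ω x)) * |u y - u x| ^ p /
        (δ * etaD Ω x) ^ ((d : ℝ) + p) := by
    intro δ hδ
    refine setIntegral_congr_fun hΩm fun x hx => ?_
    have hη := hηpos x hx
    simp only [hG]
    rw [inner_integral_eq (mul_pos hδ.1 hη) hΩm hx
      ((ball_subset_ball (mul_le_of_le_one_left hη.le hδ.2.le)).trans (ball_infDist_frontier_subset hx)) hρsupp huv,
      hγw hx]
  have hRHS : ∫ x in Ω, ‖fderivWithin ℝ u Ω x‖ ^ p * γ x ^ (-β) =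
      ∫ x in Ω, w x ^ (-β) * ‖fderiv ℝ v x‖ ^ p := by
    refine setIntegral_congr_fun hΩm fun x hx => ?_
    rw [fderivWithin_congr huv (huv hx), fderivWithin_of_isOpen hΩo hx, hγw hx, mul_comm]
  have hIoo : Ioo (0 : ℝ) 1 ∈ 𝓝[>] (0 : ℝ) := Ioo_mem_nhdsGT one_pos
  rw [hRHS]
  refine Tendsto.congr' (f₁ := fun δ => ∫ x in Ω, G δ x)
    (by filter_upwards [hIoo] with δ hδ using hFG δ hδ) ?_
  refine tendsto_integral_filter_of_dominated_convergence
    (fun x => w x ^ (-β) * ((K : ℝ) ^ p * Cbar d p)) ?_ ?_ (hwint.mul_const _) ?_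
  · refine Eventually.of_forall fun δ => ?_
    have hm : StronglyMeasurable (Function.uncurry fun (x z : Euc d) =>
        ρ ‖z‖ * |(v (x + (δ * etaD Ω x) • z) - v x) / (δ * etaD Ω x)| ^ p) :=
      Measurable.stronglyMeasurable (by unfold Function.uncurry; fun_prop)
    exact ((hwm.pow_const _).stronglyMeasurable.mul hm.integral_prod_right).aestronglyMeasurable
  · filter_upwards [hIoo] with δ hδ
    filter_upwards [ae_restrict_mem hΩm] with x hx
    have ht := mul_pos hδ.1 (hηpos x hx)
    rw [Real.norm_of_nonneg (mul_nonneg (hwnn x hx)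
      (integral_nonneg fun z => mul_nonneg (hρnn _) (by positivity)))]
    refine mul_le_mul_of_nonneg_left ?_ (hwnn x hx)
    rw [← hρ, ← integral_const_mul]
    refine integral_mono_of_nonneg
      (Eventually.of_forall fun z => mul_nonneg (hρnn _) (by positivity))
      (hρint.const_mul _) (Eventually.of_forall fun z => ?_)
    have h := mul_le_mul_of_nonneg_left (difference_quotient_rpow_le hp ht hv x z) (hρnn ‖z‖)
    calc _ ≤ _ := h
      _ = _ := by ring
  · filter_upwards [ae_restrict_mem hΩm, ae_restrict_of_ae hv.ae_differentiableAt] with x hx hdx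
    refine Tendsto.const_mul _ ((tendsto_inner_integral hd hp hρnn hρmeas hρint hρ hv hdx).comp ?_)
    have hη := hηpos x hx
    refine tendsto_nhdsWithin_iff.2 ⟨?_, ?_⟩
    · have : Tendsto (fun δ : ℝ => δ * etaD Ω x) (𝓝 0) (𝓝 (0 * etaD Ω x)) :=
        tendsto_id.mul_const _
      rw [zero_mul] at this
      exact this.mono_left nhdsWithin_le_nhds
    · filter_upwards [self_mem_nhdsWithin] with δ hδ using mul_pos hδ hη

end
end
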